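/- arXiv:math/9904187 — 2 statements merged into one kernel-verified Lean document; each statement's English description precedes it below -/
import Mathlib

section
/- Let K be a commutative ring, R a quasiassociative algebra over K, M a K-module, and χ : R → End_K(M) a K-linear map satisfying χ(a*b) = χ(a) ∘ χ(b) for all a, b ∈ R. Write a.m for χ(a)(m). Define δ on cochains Cⁿ = Hom_K(R^⊗n, M) by δψ(a₁,…,aₙ,a) = Σ_{i=1}^{n} (−1)^{i+1}[ψ(a₁,…,âᵢ,…,aₙ, aᵢ*a) − aᵢ.ψ(a₁,…,âᵢ,…,aₙ, a)] + Σ_{1≤i<j≤n} (−1)^{i+j+1} ψ([aᵢ,aⱼ], a₁,…,âᵢ,…,âⱼ,…,aₙ, a), with δm(a) = −a.m for m ∈ C⁰ = M and [a,b] = a*b − b*a. Then δ(δψ) = 0 for all ψ ∈ C⁰, C¹, C², and for all ψ ∈ Cⁿ, n ≥ 3, that are antisymmetric in their first two arguments. -/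
/-- The quasiassociative coboundary `δ : Cⁿ → Cⁿ⁺¹` with coefficients in a module `M`
on which `R` acts via `χ` (here `n = m + 2 ≥ 2`):
`δψ(a₁,…,aₙ,a) = Σᵢ (−1)^{i+1} [ψ(…,âᵢ,…, aᵢ*a) − aᵢ.ψ(…,âᵢ,…, a)]
  + Σ_{i<j} (−1)^{i+j+1} ψ([aᵢ,aⱼ], …,âᵢ,…,âⱼ,…, a)`,
with `[a,b] = a*b − b*a` and `a.m = χ(a)(m)`, written 0-indexed: the argument vector
is `v : Fin (m+3) → R` with `a = v (Fin.last (m+2))`, omission realized via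
`Fin.succAbove`. -/
noncomputable def qDeltaRep {K R M : Type*} [CommRing K] [AddCommGroup R] [Module K R]
    [AddCommGroup M] [Module K M]
    (mul : R →ₗ[K] R →ₗ[K] R) (χ : R →ₗ[K] Module.End K M) {m : ℕ}
    (ψ : (Fin (m + 2) → R) → M) : (Fin (m + 3) → R) → M :=
  fun v =>
    (∑ i : Fin (m + 2), ((-1 : ℤ) ^ (i : ℕ)) •
        (ψ (Fin.snoc (fun j : Fin (m + 1) => v ((i.succAbove j).castSucc))
              (mul (v i.castSucc) (v (Fin.last (m + 2))))) -
          χ (v i.castSucc)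
            (ψ (Fin.snoc (fun j : Fin (m + 1) => v ((i.succAbove j).castSucc))
                (v (Fin.last (m + 2))))))) +
    ∑ i : Fin (m + 2), ∑ j : Fin (m + 1),
      if i < i.succAbove j then
        ((-1 : ℤ) ^ ((i : ℕ) + ((i.succAbove j : Fin (m + 2)) : ℕ) + 1)) •
          ψ (Fin.snoc
              (Fin.cons
                (mul (v i.castSucc) (v ((i.succAbove j).castSucc)) -
                  mul (v ((i.succAbove j).castSucc)) (v i.castSucc))
                (fun k : Fin m => v ((i.succAbove (j.succAbove k)).castSucc)))
              (v (Fin.last (m + 2))))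
      else 0

/-- The coboundary `δ : C⁰ = M → C¹`, `δm(a) = −a.m`. -/
noncomputable def qDeltaRep0 {K R M : Type*} [CommRing K] [AddCommGroup R] [Module K R]
    [AddCommGroup M] [Module K M]
    (χ : R →ₗ[K] Module.End K M) (x : M) : (Fin 1 → R) → M :=
  fun v => -(χ (v 0) x)

/-- The coboundary `δ : C¹ → C²`, `δψ(a₁, a) = ψ(a₁*a) − a₁.ψ(a)`. -/
noncomputable def qDeltaRep1 {K R M : Type*} [CommRing K] [AddCommGroup R] [Module K R]
    [AddCommGroup M] [Module K M]
    (mul : R →ₗ[K] R →ₗ[K] R) (χ : R →ₗ[K] Module.End K M)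
    (ψ : (Fin 1 → R) → M) : (Fin 2 → R) → M :=
  fun v => ψ (fun _ => mul (v 0) (v 1)) - χ (v 0) (ψ (fun _ => v 1))

/-!
Left multiplication is a representation of the commutator Lie ring of `R` on `R`, this being what
quasiassociativity says, so `(a • φ)(x) = a.φ(x) - φ(a * x)` makes `Hom(R, M)` a Lie module.
Currying the last argument of a cochain turns `δ` into `-d`, where `d` is the Chevalley-Eilenberg
differential with coefficients in `Hom(R, M)`, and `δ ∘ δ = 0` becomes `d ∘ d = 0`. The latter is
proved for cochains that need not be alternating: expanding `d (d f)` into signed sums over the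
arguments singled out, the terms with two actions cancel against those where a bracket acts, the
mixed terms cancel in pairs, and the terms with two brackets vanish by the Jacobi identity when
nested and by antisymmetry in the first two arguments when separate.
-/

section SignedSums

variable {R M N : Type*} [AddCommGroup M] [AddCommGroup N]

/-- The alternating sum `∑ᵢ (-1)ⁱ g(lᵢ, l without lᵢ)` over the entries of a list, used for the
single sums of coboundary formulas. Indices start at `0`, and the recursion is a Laplace-type
expansion along the head. -/
def signedSum : (R → List R → M) → List R → M
  | _, [] => 0
  | g, a :: l => g a l - signedSum (fun b l' => g b (a :: l')) l

/-- The alternating sum `∑_{i < j} (-1)^(i + j + 1) g(lᵢ, lⱼ, l without lᵢ, lⱼ)` over the pairs of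
entries of a list, used for the double sums of coboundary formulas. -/
def signedPairSum : (R → R → List R → M) → List R → M
  | _, [] => 0
  | g, a :: l => signedSum (g a) l + signedPairSum (fun b c l' => g b c (a :: l')) l

theorem signedSum_add (g h : R → List R → M) (l : List R) :
    signedSum (fun a l' => g a l' + h a l') l = signedSum g l + signedSum h l := by
  induction l generalizing g h with
  | nil => simp [signedSum]
  | cons a l ih => simp only [signedSum, ih]; abel

theorem signedSum_sub (g h : R → List R → M) (l : List R) :
    signedSum (fun a l' => g a l' - h a l') l = signedSum g l - signedSum h l := by
  induction l generalizing g h with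
  | nil => simp [signedSum]
  | cons a l ih => simp only [signedSum, ih]; abel

theorem map_signedSum (F : M →+ N) (g : R → List R → M) (l : List R) :
    F (signedSum g l) = signedSum (fun a l' => F (g a l')) l := by
  induction l generalizing g with
  | nil => simp [signedSum]
  | cons a l ih => simp only [signedSum, map_sub, ih]

theorem signedSum_zero (l : List R) : signedSum (fun _ _ => (0 : M)) l = 0 :=
  (map_signedSum (0 : M →+ M) (fun _ _ => 0) l).symm

theorem signedPairSum_add (g h : R → R → List R → M) (l : List R) :
    signedPairSum (fun a b l' => g a b l' + h a b l') l =
      signedPairSum g l + signedPairSum h l := by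
  induction l generalizing g h with
  | nil => simp [signedPairSum]
  | cons a l ih => simp only [signedPairSum, ih, signedSum_add]; abel

theorem signedPairSum_sub (g h : R → R → List R → M) (l : List R) :
    signedPairSum (fun a b l' => g a b l' - h a b l') l =
      signedPairSum g l - signedPairSum h l := by
  induction l generalizing g h with
  | nil => simp [signedPairSum]
  | cons a l ih => simp only [signedPairSum, ih, signedSum_sub]; abel

theorem map_signedPairSum (F : M →+ N) (g : R → R → List R → M) (l : List R) :
    F (signedPairSum g l) = signedPairSum (fun a b l' => F (g a b l')) l := by
  induction l generalizing g with
  | nil => simp [signedPairSum]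
  | cons a l ih => simp only [signedPairSum, map_add, map_signedSum, ih]

theorem signedPairSum_zero (l : List R) : signedPairSum (fun _ _ _ => (0 : M)) l = 0 :=
  (map_signedPairSum (0 : M →+ M) (fun _ _ _ => 0) l).symm

theorem signedSum_signedSum (h : R → R → List R → M) (l : List R) :
    signedSum (fun a => signedSum (h a)) l =
      signedPairSum (fun a b l' => h a b l' - h b a l') l := by
  induction l generalizing h with
  | nil => rfl
  | cons x l ih =>
    simp only [signedSum, signedPairSum, signedSum_sub]
    rw [ih fun b c l' => h b c (x :: l')]
    abel

theorem signedSum_signedSum_swap (h : R → R → List R → M) (l : List R) :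
    signedSum (fun a => signedSum (h a)) l = -signedSum (fun a => signedSum fun b => h b a) l := by
  simp only [signedSum_signedSum, signedPairSum_sub, neg_sub]

theorem signedSum_signedPairSum_comm (h : R → R → R → List R → M) (l : List R) :
    signedSum (fun a => signedPairSum (h a)) l =
      signedPairSum (fun b c => signedSum fun a => h a b c) l := by
  induction l generalizing h with
  | nil => rfl
  | cons x l ih =>
    simp only [signedSum, signedPairSum, signedSum_add, signedPairSum_sub]
    rw [ih fun a b c l' => h a b c (x :: l'), signedSum_signedSum_swap fun a b => h a x b]
    abel

theorem signedPairSum_signedSum_eq_zero (h : R → R → R → List R → M)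
    (hh : ∀ a b c l, h a b c l - h a c b l + h b c a l = 0) (l : List R) :
    signedPairSum (fun a b => signedSum (h a b)) l = 0 := by
  induction l generalizing h with
  | nil => rfl
  | cons x l ih =>
    simp only [signedSum, signedPairSum, signedPairSum_sub]
    rw [ih (fun a b c l' => h a b c (x :: l')) fun a b c l' => hh a b c (x :: l'),
      signedSum_signedSum (h x), sub_zero, ← signedPairSum_add]
    simp only [hh, signedPairSum_zero]

theorem signedPairSum_signedPairSum_eq_zero (h : R → R → R → R → List R → M)
    (hh : ∀ a b c d l, h a b c d l = -h c d a b l) (l : List R) :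
    signedPairSum (fun a b => signedPairSum (h a b)) l = 0 := by
  induction l generalizing h with
  | nil => rfl
  | cons x l ih =>
    simp only [signedPairSum, signedPairSum_add]
    rw [ih (fun a b c d l' => h a b c d (x :: l')) fun a b c d l' => hh a b c d (x :: l'),
      signedSum_signedPairSum_comm (h x), add_zero, ← signedPairSum_add]
    simp only [← signedSum_add, hh x, neg_add_cancel, signedSum_zero, signedPairSum_zero]

theorem ofFn_succ_succAbove {n : ℕ} (v : Fin (n + 2) → R) (i : Fin (n + 1)) :
    (List.ofFn fun j => v (i.succ.succAbove j)) =
      v 0 :: List.ofFn fun j => v (i.succAbove j).succ := by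
  simp [List.ofFn_succ]

theorem signedSum_ofFn {n : ℕ} (g : R → List R → M) (v : Fin (n + 1) → R) :
    signedSum g (List.ofFn v) =
      ∑ i : Fin (n + 1), (-1 : ℤ) ^ (i : ℕ) • g (v i) (List.ofFn fun j => v (i.succAbove j)) := by
  induction n generalizing g with
  | zero => simp [signedSum]
  | succ n ih =>
    rw [List.ofFn_succ, signedSum, ih]
    refine Eq.trans ?_ (Fin.sum_univ_succ _).symm
    simp only [ofFn_succ_succAbove]
    simp [pow_succ, sub_eq_add_neg]

theorem signedPairSum_ofFn {n : ℕ} (g : R → R → List R → M) (v : Fin (n + 2) → R) :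
    signedPairSum g (List.ofFn v) =
      ∑ i : Fin (n + 2), ∑ j : Fin (n + 1),
        if i < i.succAbove j then
          (-1 : ℤ) ^ ((i : ℕ) + ((i.succAbove j : Fin (n + 2)) : ℕ) + 1) •
            g (v i) (v (i.succAbove j)) (List.ofFn fun k => v (i.succAbove (j.succAbove k)))
        else 0 := by
  induction n generalizing g with
  | zero => simp [signedSum, signedPairSum, Fin.sum_univ_succ]
  | succ n ih =>
    rw [List.ofFn_succ, signedPairSum, ih, signedSum_ofFn]
    refine Eq.trans ?_ (Fin.sum_univ_succ _).symm
    congr 1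
    · simp [pow_succ]
    · refine Finset.sum_congr rfl fun i _ => Eq.trans ?_ (Fin.sum_univ_succ _).symm
      have remove_two (j : Fin (n + 1)) :
          (List.ofFn fun k => v (i.succ.succAbove (j.succ.succAbove k))) =
            v 0 :: List.ofFn fun k => v (i.succAbove (j.succAbove k)).succ := by
        rw [ofFn_succ_succAbove fun k => v (i.succ.succAbove k)]
        simp
      simp only [remove_two]
      simp [pow_succ, pow_add]

end SignedSums

section LieDifferential

variable {L N : Type*} [LieRing L] [AddCommGroup N]

theorem signedPairSum_signedSum_bracket_eq_zero {f : List L → N}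
    (hadd : ∀ a b l, f ((a + b) :: l) = f (a :: l) + f (b :: l)) (l : List L) :
    signedPairSum (fun a b => signedSum fun c l' => f (⁅⁅a, b⁆, c⁆ :: l')) l = 0 := by
  refine signedPairSum_signedSum_eq_zero (fun a b c l' => f (⁅⁅a, b⁆, c⁆ :: l')) ?_ l
  intro a b c l'
  let F : L →+ N := AddMonoidHom.mk' (fun x => f (x :: l')) fun x y => hadd x y l'
  have jacobi : ⁅⁅a, b⁆, c⁆ - ⁅⁅a, c⁆, b⁆ + ⁅⁅b, c⁆, a⁆ = 0 := by
    rw [← lie_skew ⁅b, c⁆ a, ← lie_skew ⁅a, c⁆ b, leibniz_lie a b c]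
    abel
  have := congrArg F jacobi
  rwa [map_zero, map_add, map_sub] at this

variable [LieRingModule L N]

/-- The Chevalley-Eilenberg differential of a Lie ring `L` with coefficients in `N`, on arbitrary
functions of finitely many arguments. A cochain is a function on lists, so that all degrees are
treated at once and no symmetry is built in. -/
def lieDifferential (f : List L → N) (l : List L) : N :=
  signedSum (fun a l' => ⁅a, f l'⁆) l - signedPairSum (fun a b l' => f (⁅a, b⁆ :: l')) l

theorem lieDifferential_neg (f : List L → N) : lieDifferential (-f) = -lieDifferential f := by
  funext l
  have h := map_signedSum (negAddMonoidHom (α := N)) (fun a l' => ⁅a, f l'⁆) l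
  have h' := map_signedPairSum (negAddMonoidHom (α := N)) (fun a b l' => f (⁅a, b⁆ :: l')) l
  simp only [negAddMonoidHom_apply] at h h'
  simp only [lieDifferential, Pi.neg_apply, lie_neg, ← h, ← h', neg_sub_neg, neg_sub]

theorem lie_lieDifferential (f : List L → N) (a : L) (l : List L) :
    ⁅a, lieDifferential f l⁆ =
      signedSum (fun b l' => ⁅a, ⁅b, f l'⁆⁆) l -
        signedPairSum (fun b c l' => ⁅a, f (⁅b, c⁆ :: l')⁆) l := by
  let F : N →+ N := AddMonoidHom.mk' (fun n => ⁅a, n⁆) (lie_add a)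
  exact (map_sub F _ _).trans (congrArg₂ _ (map_signedSum F _ l) (map_signedPairSum F _ l))

theorem lieDifferential_cons (f : List L → N) (a : L) (l : List L) :
    lieDifferential f (a :: l) =
      ⁅a, f l⁆ - signedSum (fun b l' => ⁅b, f (a :: l')⁆) l -
        (signedSum (fun b l' => f (⁅a, b⁆ :: l')) l +
          signedPairSum (fun b c l' => f (⁅b, c⁆ :: a :: l')) l) := rfl

theorem lieDifferential_lieDifferential {f : List L → N}
    (hadd : ∀ a b l, f ((a + b) :: l) = f (a :: l) + f (b :: l))
    (hanti : ∀ a b l, f (a :: b :: l) = -f (b :: a :: l)) :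
    lieDifferential (lieDifferential f) = 0 := by
  funext l
  have double_action : signedSum (fun a => signedSum fun b l' => ⁅a, ⁅b, f l'⁆⁆) l =
      signedPairSum (fun a b l' => ⁅⁅a, b⁆, f l'⁆) l := by
    simp only [signedSum_signedSum, lie_lie]
  have mixed := signedSum_signedPairSum_comm (fun a b c l' => ⁅a, f (⁅b, c⁆ :: l')⁆) l
  have double_bracket : signedPairSum (fun a b => signedPairSum fun c d l' =>
      f (⁅c, d⁆ :: ⁅a, b⁆ :: l')) l = 0 :=
    signedPairSum_signedPairSum_eq_zero (fun a b c d l' => f (⁅c, d⁆ :: ⁅a, b⁆ :: l'))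
      (fun _ _ _ _ _ => hanti _ _ _) l
  rw [lieDifferential]
  simp only [lie_lieDifferential, lieDifferential_cons, signedSum_sub, signedPairSum_sub,
    signedPairSum_add, double_action, mixed, double_bracket,
    signedPairSum_signedSum_bracket_eq_zero hadd, Pi.zero_apply]
  abel

theorem neg_lieDifferential_neg_lieDifferential {f : List L → N}
    (hadd : ∀ a b l, f ((a + b) :: l) = f (a :: l) + f (b :: l))
    (hanti : ∀ a b l, f (a :: b :: l) = -f (b :: a :: l)) :
    -lieDifferential (-lieDifferential f) = 0 := by
  rw [lieDifferential_neg, neg_neg, lieDifferential_lieDifferential hadd hanti]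

end LieDifferential

section PreLie

variable {R M : Type*} [LeftPreLieRing R] [AddCommGroup M] [LieRingModule R M]

/-- The action `(a • φ)(x) = a • φ(x) - φ(a * x)` of a left pre-Lie ring on the additive maps into a
Lie module: `R` acts on itself by left multiplication, not by the adjoint action. -/
instance preLieHomLieRingModule : LieRingModule R (R →+ M) where
  bracket a φ := AddMonoidHom.mk' (fun x => ⁅a, φ x⁆ - φ (a * x)) fun x y => by
    simp only [map_add, lie_add, mul_add]; abel
  add_lie a b φ := by
    ext x
    simp only [AddMonoidHom.mk'_apply, AddMonoidHom.add_apply, add_lie, add_mul, map_add]; abel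
  lie_add a φ ψ := by
    ext x
    simp only [AddMonoidHom.mk'_apply, AddMonoidHom.add_apply, lie_add]; abel
  leibniz_lie a b φ := by
    ext x
    have hassoc := congrArg φ (LeftPreLieRing.assoc_symm a b x)
    simp only [associator_apply, map_sub] at hassoc
    simp only [AddMonoidHom.mk'_apply, AddMonoidHom.add_apply, leibniz_lie a b, lie_sub,
      Ring.lie_def, sub_mul, map_sub]
    linear_combination (norm := module) hassoc

theorem preLieHom_lie_apply (a : R) (φ : R →+ M) (x : R) : ⁅a, φ⁆ x = ⁅a, φ x⁆ - φ (a * x) := rfl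

theorem neg_lieDifferential_apply (f : List R → R →+ M) (l : List R) (x : R) :
    (-lieDifferential f) l x =
      signedSum (fun a l' => f l' (a * x) - ⁅a, f l' x⁆) l +
        signedPairSum (fun a b l' => f ((a * b - b * a) :: l') x) l := by
  have single := map_signedSum (AddMonoidHom.eval x) (fun a l' => ⁅a, f l'⁆) l
  have double := map_signedPairSum (AddMonoidHom.eval x) (fun a b l' => f (⁅a, b⁆ :: l')) l
  simp only [AddMonoidHom.eval_apply_apply, preLieHom_lie_apply, signedSum_sub, Ring.lie_def]
    at single double
  rw [Pi.neg_apply, AddMonoidHom.neg_apply, lieDifferential, AddMonoidHom.sub_apply, signedSum_sub]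
  simp only [Ring.lie_def, single, double]
  abel

end PreLie

section Cochains

variable {R M : Type*} [AddCommGroup R] [AddCommGroup M]

/-- Additivity of a cochain in its first and in its last argument. On these cochains the
coboundary is the Chevalley-Eilenberg differential of `Hom(R, M)`: the first slot receives the
brackets and the last one becomes the argument of `Hom(R, M)`. -/
structure IsAdditiveAtEnds {n : ℕ} (ψ : (Fin (n + 1) → R) → M) : Prop where
  cons_add (w : Fin n → R) (a b : R) :
    ψ (Fin.cons (a + b) w) = ψ (Fin.cons a w) + ψ (Fin.cons b w)
  snoc_add (w : Fin n → R) (x y : R) :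
    ψ (Fin.snoc w (x + y)) = ψ (Fin.snoc w x) + ψ (Fin.snoc w y)

/-- The list cochain `f` with values in `Hom(R, M)` agrees with the cochain `φ` of `n + 1`
arguments on lists of length `n`, the last argument of `φ` becoming that of `Hom(R, M)`. -/
def Curries (f : List R → R →+ M) {n : ℕ} (φ : (Fin (n + 1) → R) → M) : Prop :=
  ∀ (w : Fin n → R) (x : R), φ (Fin.snoc w x) = f (List.ofFn w) x

theorem Curries.eq_zero {n : ℕ} {φ : (Fin (n + 1) → R) → M}
    {f : List R → R →+ M} (h : Curries f φ) (hf : f = 0) : φ = 0 := by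
  funext v
  rw [← Fin.snoc_init_self v, h, hf]
  rfl

namespace IsAdditiveAtEnds

variable {n : ℕ} {ψ : (Fin (n + 1) → R) → M}

theorem of_multilinearMap {K : Type*} [CommRing K] [Module K R] [Module K M]
    (ψ : MultilinearMap K (fun _ : Fin (n + 1) => R) M) :
    IsAdditiveAtEnds ψ :=
  ⟨ψ.cons_add, ψ.snoc_add⟩

/-- A cochain of `n + 1` arguments as a list cochain with values in `Hom(R, M)`, extended by zero to
the lists whose length is not `n`. -/
def curry (hψ : IsAdditiveAtEnds ψ) (l : List R) : R →+ M :=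
  if h : l.length = n then
    AddMonoidHom.mk' (fun x => ψ (Fin.snoc (fun i => l.get (i.cast h.symm)) x)) (hψ.snoc_add _)
  else 0

theorem curry_eq_zero (hψ : IsAdditiveAtEnds ψ) {l : List R} (h : l.length ≠ n) :
    hψ.curry l = 0 :=
  dif_neg h

theorem curries_curry (hψ : IsAdditiveAtEnds ψ) : Curries hψ.curry ψ := by
  intro w x
  simp [curry]

theorem curry_cons_add (hψ : IsAdditiveAtEnds ψ) (a b : R) (l : List R) :
    hψ.curry ((a + b) :: l) = hψ.curry (a :: l) + hψ.curry (b :: l) := by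
  by_cases h : l.length + 1 = n
  · subst h
    ext x
    have curry_apply (c : R) : hψ.curry (c :: l) x = ψ (Fin.cons c (Fin.snoc l.get x)) := by
      rw [Fin.cons_snoc_eq_snoc_cons, hψ.curries_curry, List.ofFn_cons, List.ofFn_get]
    simp only [AddMonoidHom.add_apply, curry_apply, hψ.cons_add]
  · simp only [hψ.curry_eq_zero, List.length_cons, ne_eq, h, not_false_eq_true, add_zero]

theorem curry_cons_cons_swap {n : ℕ} {ψ : (Fin (n + 3) → R) → M} (hψ : IsAdditiveAtEnds ψ)
    (hswap : ∀ v, ψ (v ∘ Equiv.swap 0 1) = -ψ v) (a b : R) (l : List R) :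
    hψ.curry (a :: b :: l) = -hψ.curry (b :: a :: l) := by
  by_cases h : l.length = n
  · subst h
    ext x
    have curry_apply (c d : R) :
        hψ.curry (c :: d :: l) x = ψ (Fin.cons c (Fin.cons d (Fin.snoc l.get x))) := by
      rw [Fin.cons_snoc_eq_snoc_cons, Fin.cons_snoc_eq_snoc_cons, hψ.curries_curry,
        List.ofFn_cons, List.ofFn_cons, List.ofFn_get]
    rw [AddMonoidHom.neg_apply, curry_apply, curry_apply, ← hswap]
    exact congrArg ψ (Matrix.cons_cons_comp_swap_zero_one b a _).symm
  · simp [hψ.curry_eq_zero, h]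

theorem curry_cons_cons_swap_of_le_one (hψ : IsAdditiveAtEnds ψ) (hn : n ≤ 1) (a b : R)
    (l : List R) : hψ.curry (a :: b :: l) = -hψ.curry (b :: a :: l) := by
  rw [hψ.curry_eq_zero, hψ.curry_eq_zero, neg_zero] <;> simp only [List.length_cons] <;> omega

end IsAdditiveAtEnds

end Cochains

section Coboundary

variable {K R M : Type*} [CommRing K] [LeftPreLieRing R] [Module K R]
  [AddCommGroup M] [Module K M] [LieRingModule R M]
  {mul : R →ₗ[K] R →ₗ[K] R} {χ : R →ₗ[K] Module.End K M}

theorem Curries.qDeltaRep (hmul : ∀ a b, mul a b = a * b) (hχ : ∀ a m, χ a m = ⁅a, m⁆)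
    {n : ℕ} {f : List R → R →+ M} {φ : (Fin (n + 2) → R) → M} (h : Curries f φ) :
    Curries (-lieDifferential f) (qDeltaRep mul χ φ) := by
  intro w x
  rw [neg_lieDifferential_apply, signedSum_ofFn, signedPairSum_ofFn, _root_.qDeltaRep]
  simp only [h _ _, Fin.snoc_castSucc, Fin.snoc_last, List.ofFn_cons, hmul, hχ]

theorem Curries.qDeltaRep1 (hmul : ∀ a b, mul a b = a * b) (hχ : ∀ a m, χ a m = ⁅a, m⁆)
    {f : List R → R →+ M} {φ : (Fin 1 → R) → M} (h : Curries f φ) :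
    Curries (-lieDifferential f) (qDeltaRep1 mul χ φ) := by
  intro w x
  have eval_const (y : R) : φ (fun _ => y) = f [] y := h ![] y
  have snoc_zero : (Fin.snoc w x : Fin 2 → R) 0 = w 0 := Fin.snoc_castSucc (α := fun _ => R) x w 0
  have snoc_one : (Fin.snoc w x : Fin 2 → R) 1 = x := Fin.snoc_last (α := fun _ => R) x w
  rw [neg_lieDifferential_apply]
  simp [_root_.qDeltaRep1, signedSum, signedPairSum, eval_const, snoc_zero, snoc_one, hmul, hχ]

end Coboundary

/-- A quasiassociative algebra as a left pre-Lie ring on the given additive group, which supplies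
the commutator Lie ring `⁅a, b⁆ = a * b - b * a`. -/
abbrev leftPreLieRingOfQuasiassociative {K R : Type*} [CommRing K] [AddCommGroup R] [Module K R]
    (mul : R →ₗ[K] R →ₗ[K] R)
    (hquasi : ∀ a b c : R,
      mul a (mul b c) - mul (mul a b) c = mul b (mul a c) - mul (mul b a) c) :
    LeftPreLieRing R where
  __ := ‹AddCommGroup R›
  mul a b := mul a b
  left_distrib a := map_add (mul a)
  right_distrib := mul.map_add₂
  zero_mul := mul.map_zero₂
  mul_zero a := map_zero (mul a)
  assoc_symm' a b c := by
    change mul (mul a b) c - mul a (mul b c) = mul (mul b a) c - mul b (mul a c)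
    rw [← neg_inj, neg_sub, neg_sub, hquasi]

section General

attribute [local instance] LieRing.ofAssociativeRing

theorem stmt10_general {K R M : Type*} [CommRing K] [AddCommGroup R] [Module K R]
    [AddCommGroup M] [Module K M]
    (mul : R →ₗ[K] R →ₗ[K] R)
    (hquasi : ∀ a b c : R,
      mul a (mul b c) - mul (mul a b) c = mul b (mul a c) - mul (mul b a) c)
    (χ : R →ₗ[K] Module.End K M)
    (hlie : ∀ a b : R, χ (mul a b - mul b a) = ⁅χ a, χ b⁆) :
    ((∀ a b : R, χ (mul a b) = χ a * χ b) → ∀ x : M, qDeltaRep1 mul χ (qDeltaRep0 χ x) = 0) ∧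
    (∀ ψ : (Fin 1 → R) → M, IsAdditiveAtEnds ψ →
      qDeltaRep mul χ (m := 0) (qDeltaRep1 mul χ ψ) = 0) ∧
    (∀ ψ : (Fin 2 → R) → M, IsAdditiveAtEnds ψ →
      qDeltaRep mul χ (m := 1) (qDeltaRep mul χ (m := 0) ψ) = 0) ∧
    (∀ (m : ℕ) (ψ : (Fin (m + 3) → R) → M), IsAdditiveAtEnds ψ →
      (∀ v : Fin (m + 3) → R, ψ (v ∘ Equiv.swap 0 1) = -ψ v) →
      qDeltaRep mul χ (m := m + 2) (qDeltaRep mul χ (m := m + 1) ψ) = 0) := by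
  let : LeftPreLieRing R := leftPreLieRingOfQuasiassociative mul hquasi
  let χLie : R →ₗ⁅ℤ⁆ Module.End K M :=
    { χ.toAddMonoidHom.toIntLinearMap with map_lie' := hlie _ _ }
  let : LieRingModule R M := LieRingModule.compLieHom M χLie
  have hmul (a b : R) : mul a b = a * b := rfl
  have hχ (a : R) (x : M) : χ a x = ⁅a, x⁆ := rfl
  refine ⟨fun hrep x => ?_, fun ψ hψ => ?_, fun ψ hψ => ?_, fun m ψ hψ hswap => ?_⟩
  · funext v
    simp [qDeltaRep1, qDeltaRep0, hrep]
  · exact ((hψ.curries_curry.qDeltaRep1 hmul hχ).qDeltaRep hmul hχ).eq_zero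
      (neg_lieDifferential_neg_lieDifferential hψ.curry_cons_add
        (hψ.curry_cons_cons_swap_of_le_one zero_le_one))
  · exact ((hψ.curries_curry.qDeltaRep hmul hχ).qDeltaRep hmul hχ).eq_zero
      (neg_lieDifferential_neg_lieDifferential hψ.curry_cons_add
        (hψ.curry_cons_cons_swap_of_le_one le_rfl))
  · exact ((hψ.curries_curry.qDeltaRep hmul hχ).qDeltaRep hmul hχ).eq_zero
      (neg_lieDifferential_neg_lieDifferential hψ.curry_cons_add (hψ.curry_cons_cons_swap hswap))

end General

/-- for a quasiassociative algebra `R` and a left representation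
`χ : R → End_K(M)` (i.e. `χ(a*b) = χ(a)∘χ(b)`), the coboundary with coefficients in
`M` satisfies `δ(δψ) = 0` for all `ψ ∈ C⁰, C¹, C²`, and for all `ψ ∈ Cⁿ`, `n ≥ 3`,
that are antisymmetric in their first two arguments. -/
theorem stmt10 {K R M : Type*} [CommRing K] [AddCommGroup R] [Module K R]
    [AddCommGroup M] [Module K M]
    (mul : R →ₗ[K] R →ₗ[K] R)
    (hquasi : ∀ a b c : R,
      mul a (mul b c) - mul (mul a b) c = mul b (mul a c) - mul (mul b a) c)
    (χ : R →ₗ[K] Module.End K M)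
    (hrep : ∀ a b : R, χ (mul a b) = χ a * χ b) :
    (∀ x : M, qDeltaRep1 mul χ (qDeltaRep0 χ x) = 0) ∧
    (∀ ψ : MultilinearMap K (fun _ : Fin 1 => R) M,
      qDeltaRep mul χ (m := 0) (qDeltaRep1 mul χ ⇑ψ) = 0) ∧
    (∀ ψ : MultilinearMap K (fun _ : Fin 2 => R) M,
      qDeltaRep mul χ (m := 1) (qDeltaRep mul χ (m := 0) ⇑ψ) = 0) ∧
    (∀ (m : ℕ) (ψ : MultilinearMap K (fun _ : Fin (m + 3) => R) M),
      (∀ v : Fin (m + 3) → R, ψ (v ∘ Equiv.swap 0 1) = - ψ v) →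
      qDeltaRep mul χ (m := m + 2) (qDeltaRep mul χ (m := m + 1) ⇑ψ) = 0) := by
  have hlie (a b : R) : χ (mul a b - mul b a) = ⁅χ a, χ b⁆ := by
    rw [map_sub, hrep, hrep, Ring.lie_def]
  obtain ⟨h₀, h₁, h₂, h₃⟩ := stmt10_general mul hquasi χ hlie
  exact ⟨h₀ hrep, fun ψ => h₁ ψ (.of_multilinearMap ψ), fun ψ => h₂ ψ (.of_multilinearMap ψ),
    fun m ψ => h₃ m ψ (.of_multilinearMap ψ)⟩
end

section
/- Let k be a field of characteristic zero and ε ∈ k such that 1 + ε·n ≠ 0 for every integer n. On the Laurent polynomial ring k[x, x⁻¹], let * be the k-bilinear multiplication determined on monomials by x^{1−p} * x^{1−q} = (−q(1+εq)/(1+ε(p+q))) · x^{1−p−q} for p, q ∈ ℤ. Then for all u, v ∈ k[x, x⁻¹]: u*v − v*u = u·v' − u'·v, where ' = d/dx is the formal derivative. In particular the commutator of * is the Lie bracket of vector fields on the circle. -/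
/-!
Put `e p = x ^ (1 - p)`. Both sides of the identity are bilinear, so it suffices to compare them on
these monomials, where both are multiples of `e (p + q)`. The vector field bracket contributes the
coefficient `p - q`, and a product with structure function `f` contributes `f p q - f q p`. For the
quasiassociative `f` this is also `p - q`, because the numerator of the difference factors:
`p * (1 + ε * p) - q * (1 + ε * q) = (p - q) * (1 + ε * (p + q))`.
-/

/-- The bracket `u * D v - D u * v` of the vector fields `u D` and `v D` on an algebra `A`, as a
bilinear map in the coefficients `u` and `v`. It is a Lie bracket when `D` is a derivation; the
encoding only asks that `D` be linear. -/
noncomputable def vectorFieldBracket {R A : Type*} [CommRing R] [CommRing A] [Algebra R A]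
    (D : A →ₗ[R] A) : A →ₗ[R] A →ₗ[R] A :=
  (LinearMap.mul R A).compl₂ D - (LinearMap.mul R A).comp D

theorem vectorFieldBracket_apply {R A : Type*} [CommRing R] [CommRing A] [Algebra R A]
    (D : A →ₗ[R] A) (u v : A) : vectorFieldBracket D u v = u * D v - D u * v :=
  rfl

/-- The structure function of the quasiassociative product with parameter `ε`: with
`e p = x ^ (1 - p)`, the product of `e p` and `e q` is `quasiassocStructureFun ε p q • e (p + q)`.
The arguments `p`, `q` are taken in `K`, integers being cast. -/
def quasiassocStructureFun {K : Type*} [Field K] (ε p q : K) : K :=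
  -(q * (1 + ε * q)) / (1 + ε * (p + q))

theorem quasiassocStructureFun_sub_swap {K : Type*} [Field K] {ε p q : K}
    (h : 1 + ε * (p + q) ≠ 0) :
    quasiassocStructureFun ε p q - quasiassocStructureFun ε q p = p - q := by
  rw [quasiassocStructureFun, quasiassocStructureFun, add_comm q p, ← sub_div, div_eq_iff h]
  ring

section LaurentPolynomial

open LaurentPolynomial

theorem laurentPolynomial_linearMap_ext {R M : Type*} [Semiring R] [AddCommMonoid M]
    [Module R M] {f g : R[T;T⁻¹] →ₗ[R] M} (h : ∀ n, f (T n) = g (T n)) : f = g :=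
  AddMonoidAlgebra.lhom_ext' fun n ↦ LinearMap.ext_ring (h n)

theorem laurentPolynomial_bilinearMap_ext {R M : Type*} [CommSemiring R] [AddCommMonoid M]
    [Module R M] {B B' : R[T;T⁻¹] →ₗ[R] R[T;T⁻¹] →ₗ[R] M}
    (h : ∀ m n, B (T m) (T n) = B' (T m) (T n)) : B = B' :=
  laurentPolynomial_linearMap_ext fun m ↦ laurentPolynomial_linearMap_ext (h m)

variable {R : Type*} [CommRing R] {D : R[T;T⁻¹] →ₗ[R] R[T;T⁻¹]}

theorem vectorFieldBracket_T_one_sub (hD : ∀ n : ℤ, D (T n) = (n : R) • T (n - 1)) (p q : ℤ) :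
    vectorFieldBracket D (T (1 - p)) (T (1 - q)) = ((p : R) - q) • T (1 - p - q) := by
  have hleft : (1 - p) + (1 - q - 1) = 1 - p - q := by ring
  have hright : (1 - p - 1) + (1 - q) = 1 - p - q := by ring
  rw [vectorFieldBracket_apply, hD, hD, mul_smul_comm, smul_mul_assoc, ← T_add, ← T_add, hleft,
    hright, ← sub_smul]
  congr 1
  push_cast
  ring

theorem sub_flip_eq_vectorFieldBracket (hD : ∀ n : ℤ, D (T n) = (n : R) • T (n - 1))
    {B : R[T;T⁻¹] →ₗ[R] R[T;T⁻¹] →ₗ[R] R[T;T⁻¹]} {f : ℤ → ℤ → R}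
    (hB : ∀ p q, B (T (1 - p)) (T (1 - q)) = f p q • T (1 - p - q))
    (hf : ∀ p q : ℤ, f p q - f q p = p - q) :
    B - B.flip = vectorFieldBracket D := by
  refine laurentPolynomial_bilinearMap_ext fun m n ↦ ?_
  obtain ⟨p, rfl⟩ := (Equiv.subLeft (1 : ℤ)).surjective m
  obtain ⟨q, rfl⟩ := (Equiv.subLeft (1 : ℤ)).surjective n
  calc B (T (1 - p)) (T (1 - q)) - B (T (1 - q)) (T (1 - p))
      = (f p q - f q p) • T (1 - p - q) := by rw [hB, hB, sub_right_comm 1 q p, sub_smul]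
    _ = ((p : R) - q) • T (1 - p - q) := by rw [hf]
    _ = vectorFieldBracket D (T (1 - p)) (T (1 - q)) := (vectorFieldBracket_T_one_sub hD p q).symm

end LaurentPolynomial

theorem stmt12_general {k : Type*} [Field k] (ε : k)
    (hε : ∀ n : ℤ, (1 : k) + ε * (n : k) ≠ 0)
    (qmul : LaurentPolynomial k →ₗ[k] LaurentPolynomial k →ₗ[k] LaurentPolynomial k)
    (hqmul : ∀ p q : ℤ,
      qmul (LaurentPolynomial.T (1 - p)) (LaurentPolynomial.T (1 - q))
        = (-((q : k) * (1 + ε * (q : k))) / (1 + ε * ((p : k) + (q : k)))) •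
            LaurentPolynomial.T (1 - p - q))
    (deriv : LaurentPolynomial k →ₗ[k] LaurentPolynomial k)
    (hderiv : ∀ n : ℤ,
      deriv (LaurentPolynomial.T n) = (n : k) • LaurentPolynomial.T (n - 1)) :
    ∀ u v : LaurentPolynomial k,
      qmul u v - qmul v u = u * deriv v - deriv u * v := by
  have hf (p q : ℤ) :
      quasiassocStructureFun ε p q - quasiassocStructureFun ε q p = (p : k) - q :=
    quasiassocStructureFun_sub_swap (mod_cast hε (p + q))
  exact LinearMap.congr_fun₂ (sub_flip_eq_vectorFieldBracket hderiv hqmul hf)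

/-- on the Laurent polynomial ring `k[x, x⁻¹]`, the `k`-bilinear
multiplication `*` determined on monomials by
`x^{1−p} * x^{1−q} = (−q(1+εq)/(1+ε(p+q))) x^{1−p−q}` has commutator
`u*v − v*u = u·v' − u'·v`, where `'` is the formal derivative (determined by
`(xⁿ)' = n xⁿ⁻¹`); i.e. its commutator is the Lie bracket of vector fields on the
circle. -/
theorem stmt12 {k : Type*} [Field k] [CharZero k] (ε : k)
    (hε : ∀ n : ℤ, (1 : k) + ε * (n : k) ≠ 0)
    (qmul : LaurentPolynomial k →ₗ[k] LaurentPolynomial k →ₗ[k] LaurentPolynomial k)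
    (hqmul : ∀ p q : ℤ,
      qmul (LaurentPolynomial.T (1 - p)) (LaurentPolynomial.T (1 - q))
        = (-((q : k) * (1 + ε * (q : k))) / (1 + ε * ((p : k) + (q : k)))) •
            LaurentPolynomial.T (1 - p - q))
    (deriv : LaurentPolynomial k →ₗ[k] LaurentPolynomial k)
    (hderiv : ∀ n : ℤ,
      deriv (LaurentPolynomial.T n) = (n : k) • LaurentPolynomial.T (n - 1)) :
    ∀ u v : LaurentPolynomial k,
      qmul u v - qmul v u = u * deriv v - deriv u * v :=
  stmt12_general ε hε qmul hqmul deriv hderiv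
end
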